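/- Let a, b, c be pairwise coprime positive integers with c² = a² + b² + ab, and let m ≥ 1 be an integer. Then the triangle with side lengths ((a+2b)·m·a·c, (b+2a)·m·b·c, m·c³) tiles into (a+2b)·(b+2a)·m²·c² congruent copies of the triangle with side lengths (a, b, c). -/

import Mathlib

noncomputable section

abbrev Plane := EuclideanSpace ℝ (Fin 2)

/-- The point (x, y) in the Euclidean plane. -/
def pt (x y : ℝ) : Plane := (WithLp.equiv 2 (Fin 2 → ℝ)).symm ![x, y]

/-- `Δ` is a triangle with side lengths `(p, q, r)`: the convex hull of points `P, Q, R`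
with `dist Q R = p`, `dist P R = q`, `dist P Q = r`. -/
def IsTriangle (p q r : ℝ) (Δ : Set Plane) : Prop :=
  ∃ P Q R : Plane, dist Q R = p ∧ dist P R = q ∧ dist P Q = r ∧
    Δ = convexHull ℝ {P, Q, R}

/-- `S` tiles into `N` congruent copies of the `(p, q, r)` triangle: there are isometries
`f 1, …, f N` of the plane and a triangle `Δ` with side lengths `(p, q, r)` such that
`S` is the union of the `f i '' Δ` and their interiors are pairwise disjoint. -/
def TilesInto (S : Set Plane) (N : ℕ) (p q r : ℝ) : Prop :=
  ∃ (f : Fin N → Plane ≃ᵢ Plane) (Δ : Set Plane),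
    IsTriangle p q r Δ ∧
    S = ⋃ i, f i '' Δ ∧
    ∀ i j : Fin N, i ≠ j → interior (f i '' Δ) ∩ interior (f j '' Δ) = ∅

/-!
It is enough to cover `Δ` by `N` tiles: comparing areas then shows that they do not overlap.

The tile has an angle of 120° between its sides `a` and `b`, and `Δ` has an angle of 60° at `R`.
Cut from `Δ` the equilateral triangle of side `2mabc` with corner `R` and join the midpoint of its
third side to `P` and `Q`. What remains are three triangles similar to the tile, with the integral
ratios `mbc`, `mac` and `mc²`, hence covered by tiles in the obvious way.

The equilateral triangle is a pinwheel of three trapezoids, each sliced into rows of height `ab`.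
A row consists of parallelograms with sides `a`, `ab` or `b`, `ab`, made of pairs of tiles, and of
one trapezoid with long edge `c²`, which splits into the tiles scaled by `b`, `a` and `c`. A row
with short edge `Jab` can be filled this way if `Jab = ia + jb + a² + b²` is solvable in natural
numbers, hence when `J` is not too small; the pinwheel avoids the short rows near the apex of the
triangle.
-/

section ConvexHull

variable {E : Type*} [AddCommGroup E] [Module ℝ E] {A B C D : E}

theorem add_smul_mem_segment (A u : E) {x y : ℝ} (hx : 0 ≤ x) (hxy : x ≤ y) (hy : 0 < y) :
    A + x • u ∈ segment ℝ A (A + y • u) := by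
  refine ⟨1 - x / y, x / y, sub_nonneg.mpr ((div_le_one hy).mpr hxy), by positivity, by ring, ?_⟩
  match_scalars
  · ring
  · field_simp

theorem segment_eq_union_of_mem (h : D ∈ segment ℝ B C) :
    segment ℝ B C = segment ℝ B D ∪ segment ℝ D C := by
  refine Set.Subset.antisymm (fun X hX ↦ ?_) (Set.union_subset
    ((convex_segment B C).segment_subset (left_mem_segment ℝ B C) h)
    ((convex_segment B C).segment_subset h (right_mem_segment ℝ B C)))
  rw [segment_eq_image_lineMap] at h hX
  obtain ⟨d, ⟨hd₀, hd₁⟩, rfl⟩ := h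
  obtain ⟨x, ⟨hx₀, hx₁⟩, rfl⟩ := hX
  have mem_segment {y z : ℝ} (hxyz : x ∈ segment ℝ y z) :
      AffineMap.lineMap B C x ∈
        segment ℝ (AffineMap.lineMap B C y) (AffineMap.lineMap B C z) :=
    image_segment ℝ (AffineMap.lineMap B C : ℝ →ᵃ[ℝ] E) y z ▸ Set.mem_image_of_mem _ hxyz
  rcases le_total x d with hxd | hdx
  · left
    simpa using mem_segment (y := 0) (segment_eq_Icc hd₀ ▸ ⟨hx₀, hxd⟩)
  · right
    simpa using mem_segment (z := 1) (segment_eq_Icc hd₁ ▸ ⟨hdx, hx₁⟩)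

theorem convexHull_triple_eq_convexJoin (A B C : E) :
    convexHull ℝ {A, B, C} = convexJoin ℝ {A} (segment ℝ B C) := by
  rw [convexHull_insert (Set.insert_nonempty _ _), convexHull_pair]

theorem convexHull_triple_eq_union_of_mem_segment (h : D ∈ segment ℝ B C) :
    convexHull ℝ {A, B, C} = convexHull ℝ {A, B, D} ∪ convexHull ℝ {A, D, C} := by
  simp only [convexHull_triple_eq_convexJoin, segment_eq_union_of_mem h, convexJoin_union_right]

theorem convexHull_triple_eq_union_of_mem (h : D ∈ convexHull ℝ {A, B, C}) :
    convexHull ℝ {A, B, C} =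
      convexHull ℝ {A, B, D} ∪ convexHull ℝ {A, C, D} ∪ convexHull ℝ {D, B, C} := by
  rw [convexHull_triple_eq_convexJoin, convexJoin_singleton_left] at h
  obtain ⟨G, hG, hD⟩ := Set.mem_iUnion₂.mp h
  have cut (X : E) :
      convexHull ℝ {A, X, G} = convexHull ℝ {A, X, D} ∪ convexHull ℝ {D, X, G} := by
    rw [Set.insert_comm, convexHull_triple_eq_union_of_mem_segment hD,
      Set.insert_comm X A, Set.insert_comm X D]
  rw [convexHull_triple_eq_union_of_mem_segment hG, convexHull_triple_eq_union_of_mem_segment hG,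
    Set.pair_comm G C, cut B, cut C, Set.pair_comm C G]
  ac_rfl

theorem convexHull_triple_eq_union_of_mem_sides {F G : E} (hF : F ∈ segment ℝ A B)
    (hG : G ∈ segment ℝ A C) (hD : D ∈ segment ℝ F G) :
    convexHull ℝ {A, B, C} = convexHull ℝ {A, F, G} ∪ convexHull ℝ {B, D, F} ∪
      convexHull ℝ {D, C, G} ∪ convexHull ℝ {B, C, D} := by
  have hmem : D ∈ convexHull ℝ {A, B, C} := by
    have hconv := convex_convexHull ℝ {A, B, C}
    have vertex {X : E} (hX : X ∈ ({A, B, C} : Set E)) := subset_convexHull ℝ _ hX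
    exact hconv.segment_subset (hconv.segment_subset (vertex (by simp)) (vertex (by simp)) hF)
      (hconv.segment_subset (vertex (by simp)) (vertex (by simp)) hG) hD
  have cut {X Y : E} (hY : Y ∈ segment ℝ A X) :
      convexHull ℝ {A, X, D} = convexHull ℝ {A, Y, D} ∪ convexHull ℝ {D, X, Y} := by
    rw [Set.pair_comm, Set.insert_comm, convexHull_triple_eq_union_of_mem_segment hY,
      Set.insert_comm, Set.pair_comm D Y, Set.pair_comm Y X]
  rw [convexHull_triple_eq_union_of_mem hmem, convexHull_triple_eq_union_of_mem_segment hD,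
    cut hF, cut hG, Set.insert_comm B D, Set.insert_comm D B {C}, Set.pair_comm D C,
    Set.pair_comm D G]
  ac_rfl

end ConvexHull

section Oblique

variable {E : Type*} [AddCommGroup E] [Module ℝ E]

/-- The parallelogram with corner `A` and sides `X • u`, `Y • v`. -/
def parallelogram (A u v : E) (X Y : ℝ) : Set E :=
  {P | ∃ s t : ℝ, (0 ≤ s ∧ s ≤ X) ∧ (0 ≤ t ∧ t ≤ Y) ∧ A + s • u + t • v = P}

/-- The trapezoid of height `h` cut off the triangle with corner `A` and sides `k • u`, `k • v`
by a line parallel to `u`; it is the whole triangle when `h = k`. -/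
def trapezoid (A u v : E) (k h : ℝ) : Set E :=
  {P | ∃ s t : ℝ, 0 ≤ s ∧ (0 ≤ t ∧ t ≤ h) ∧ s + t ≤ k ∧ A + s • u + t • v = P}

theorem parallelogram_smul_smul (A u v : E) {x y : ℝ} (hx : 0 < x) (hy : 0 < y) (X Y : ℝ) :
    parallelogram A (x • u) (y • v) X Y = parallelogram A u v (x * X) (y * Y) := by
  ext P
  constructor
  · rintro ⟨s, t, ⟨hs₀, hs⟩, ⟨ht₀, ht⟩, rfl⟩
    exact ⟨x * s, y * t, ⟨by positivity, by gcongr⟩, ⟨by positivity, by gcongr⟩, by module⟩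
  · rintro ⟨s, t, ⟨hs₀, hs⟩, ⟨ht₀, ht⟩, rfl⟩
    refine ⟨s / x, t / y, ⟨by positivity, (div_le_iff₀' hx).mpr hs⟩,
      ⟨by positivity, (div_le_iff₀' hy).mpr ht⟩, ?_⟩
    simp only [smul_smul, div_mul_cancel₀ _ hx.ne', div_mul_cancel₀ _ hy.ne']

theorem trapezoid_smul_smul (A u v : E) {x : ℝ} (hx : 0 < x) (k h : ℝ) :
    trapezoid A (x • u) (x • v) k h = trapezoid A u v (x * k) (x * h) := by
  ext P
  constructor
  · rintro ⟨s, t, hs, ⟨ht₀, ht⟩, hst, rfl⟩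
    refine ⟨x * s, x * t, by positivity, ⟨by positivity, by gcongr⟩, ?_, by module⟩
    rw [← mul_add]
    gcongr
  · rintro ⟨s, t, hs, ⟨ht₀, ht⟩, hst, rfl⟩
    refine ⟨s / x, t / x, by positivity, ⟨by positivity, (div_le_iff₀' hx).mpr ht⟩, ?_, ?_⟩
    · rwa [← add_div, div_le_iff₀' hx]
    · simp only [smul_smul, div_mul_cancel₀ _ hx.ne']

theorem parallelogram_swap (A u v : E) (X Y : ℝ) :
    parallelogram A u v X Y = parallelogram A v u Y X := by
  ext P
  constructor <;>
  · rintro ⟨s, t, hs, ht, rfl⟩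
    exact ⟨t, s, ht, hs, by module⟩

theorem parallelogram_neg (A u v : E) (Y : ℝ) :
    parallelogram A u v 1 Y = parallelogram (A + u) (-u) v 1 Y := by
  ext P
  constructor <;>
  · rintro ⟨s, t, ⟨hs₀, hs₁⟩, ht, rfl⟩
    exact ⟨1 - s, t, ⟨by linarith, by linarith⟩, ht, by module⟩

theorem parallelogram_one_one_eq_union (A u v : E) :
    parallelogram A u v 1 1 =
      trapezoid A u v 1 1 ∪ trapezoid (A + u + v) (-u) (-v) 1 1 := by
  ext P
  constructor
  · rintro ⟨s, t, ⟨hs₀, hs₁⟩, ⟨ht₀, ht₁⟩, rfl⟩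
    rcases le_total (s + t) 1 with hst | hst
    · exact .inl ⟨s, t, hs₀, ⟨ht₀, ht₁⟩, hst, rfl⟩
    · exact .inr ⟨1 - s, 1 - t, by linarith, ⟨by linarith, by linarith⟩, by linarith, by module⟩
  · rintro (⟨s, t, hs₀, ⟨ht₀, ht₁⟩, hst, rfl⟩ | ⟨s, t, hs₀, ⟨ht₀, ht₁⟩, hst, rfl⟩)
    · exact ⟨s, t, ⟨hs₀, by linarith⟩, ⟨ht₀, ht₁⟩, rfl⟩
    · exact ⟨1 - s, 1 - t, ⟨by linarith, by linarith⟩, ⟨by linarith, by linarith⟩, by module⟩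

theorem parallelogram_add_eq_union (A u v : E) {X X' : ℝ} (hX : 0 ≤ X) (hX' : 0 ≤ X') (Y : ℝ) :
    parallelogram A u v (X + X') Y =
      parallelogram A u v X Y ∪ parallelogram (A + X • u) u v X' Y := by
  ext P
  constructor
  · rintro ⟨s, t, ⟨hs₀, hs⟩, ht, rfl⟩
    rcases le_total s X with hsX | hXs
    · exact .inl ⟨s, t, ⟨hs₀, hsX⟩, ht, rfl⟩
    · exact .inr ⟨s - X, t, ⟨by linarith, by linarith⟩, ht, by module⟩
  · rintro (⟨s, t, ⟨hs₀, hs⟩, ht, rfl⟩ | ⟨s, t, ⟨hs₀, hs⟩, ht, rfl⟩)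
    · exact ⟨s, t, ⟨hs₀, by linarith⟩, ht, rfl⟩
    · exact ⟨X + s, t, ⟨by linarith, by linarith⟩, ht, by module⟩

theorem trapezoid_add_eq_parallelogram_union (A u v : E) {x k h : ℝ} (hx : 0 ≤ x) (hhk : h ≤ k) :
    trapezoid A u v (x + k) h = parallelogram A u v x h ∪ trapezoid (A + x • u) u v k h := by
  ext P
  constructor
  · rintro ⟨s, t, hs, ht, hst, rfl⟩
    rcases le_total s x with hsx | hxs
    · exact .inl ⟨s, t, ⟨hs, hsx⟩, ht, rfl⟩
    · exact .inr ⟨s - x, t, by linarith, ht, by linarith, by module⟩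
  · rintro (⟨s, t, ⟨hs, hsx⟩, ht, rfl⟩ | ⟨s, t, hs, ht, hst, rfl⟩)
    · exact ⟨s, t, hs, ht, by linarith [ht.2], rfl⟩
    · exact ⟨x + s, t, by linarith, ht, by linarith, by module⟩

theorem trapezoid_add_eq_union (A u v : E) (k : ℝ) {h h' : ℝ} (hh : 0 ≤ h) (hh' : 0 ≤ h') :
    trapezoid A u v k (h + h') = trapezoid A u v k h ∪ trapezoid (A + h • v) u v (k - h) h' := by
  ext P
  constructor
  · rintro ⟨s, t, hs, ⟨ht₀, ht⟩, hst, rfl⟩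
    rcases le_total t h with hth | hht
    · exact .inl ⟨s, t, hs, ⟨ht₀, hth⟩, hst, rfl⟩
    · exact .inr ⟨s, t - h, hs, ⟨by linarith, by linarith⟩, by linarith, by module⟩
  · rintro (⟨s, t, hs, ⟨ht₀, ht⟩, hst, rfl⟩ | ⟨s, t, hs, ⟨ht₀, ht⟩, hst, rfl⟩)
    · exact ⟨s, t, hs, ⟨ht₀, by linarith⟩, hst, rfl⟩
    · exact ⟨s, h + t, hs, ⟨by linarith, by linarith⟩, by linarith, by module⟩

theorem trapezoid_self_eq_pinwheel (A u v : E) {o r : ℝ} (ho : 0 ≤ o) (hr : 0 ≤ r) :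
    trapezoid A u v (2 * o + r) (2 * o + r) =
      trapezoid A u v (o + o) o ∪ trapezoid (A + o • v) v u (r + o) o ∪
        trapezoid (A + (2 * o + r) • u) (v - u) (-u) (o + r) r := by
  ext P
  constructor
  · rintro ⟨s, t, hs, ⟨ht₀, -⟩, hst, rfl⟩
    by_cases hleft : s ≤ o ∧ o ≤ t
    · exact .inl (.inr ⟨t - o, s, by linarith, ⟨hs, hleft.1⟩, by linarith, by module⟩)
    by_cases hlow : s + t ≤ 2 * o
    · exact .inl (.inl ⟨s, t, hs, ⟨ht₀, by by_contra!; exact hleft ⟨by linarith, this.le⟩⟩,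
        by linarith, rfl⟩)
    · refine .inr ⟨t, 2 * o + r - (s + t), ht₀, ⟨by linarith, by linarith⟩, ?_, by module⟩
      by_contra!
      exact hleft ⟨by linarith, by linarith⟩
  · rintro ((⟨s, t, hs, ⟨ht₀, ht⟩, hst, rfl⟩ | ⟨s, t, hs, ⟨ht₀, -⟩, hst, rfl⟩) |
      ⟨s, t, hs, ⟨ht₀, -⟩, hst, rfl⟩)
    · exact ⟨s, t, hs, ⟨ht₀, by linarith⟩, by linarith, rfl⟩
    · exact ⟨t, o + s, ht₀, ⟨by linarith, by linarith⟩, by linarith, by module⟩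
    · exact ⟨2 * o + r - s - t, s, by linarith, ⟨hs, by linarith⟩, by linarith, by module⟩

theorem convex_trapezoid (A u v : E) (k h : ℝ) : Convex ℝ (trapezoid A u v k h) := by
  rintro _ ⟨s, t, hs, ⟨ht₀, ht⟩, hst, rfl⟩ _ ⟨s', t', hs', ⟨ht₀', ht'⟩, hst', rfl⟩ x y hx hy hxy
  refine ⟨x * s + y * s', x * t + y * t', by positivity, ⟨by positivity, ?_⟩, ?_, ?_⟩
  · linear_combination x * ht + y * ht' + h * hxy
  · linear_combination x * hst + y * hst' + k * hxy
  · obtain rfl : y = 1 - x := by linarith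
    module

theorem smul_add_smul_add_smul_mem_convexHull (A B C : E) {x y z : ℝ} (hx : 0 ≤ x) (hy : 0 ≤ y)
    (hz : 0 ≤ z) (h : x + y + z = 1) : x • A + y • B + z • C ∈ convexHull ℝ {A, B, C} := by
  have hsum := (convex_convexHull ℝ {A, B, C}).sum_mem (t := Finset.univ)
    (w := ![x, y, z]) (z := ![A, B, C]) (by simp [Fin.forall_fin_succ, hx, hy, hz])
    (by simpa [Fin.sum_univ_three] using h)
    (fun i _ ↦ subset_convexHull ℝ _ (by fin_cases i <;> simp))
  simpa [Fin.sum_univ_three] using hsum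

theorem trapezoid_one_one (A u v : E) :
    trapezoid A u v 1 1 = convexHull ℝ {A, A + u, A + v} := by
  refine Set.Subset.antisymm ?_ (convexHull_min ?_ (convex_trapezoid A u v 1 1))
  · rintro _ ⟨s, t, hs, ⟨ht, -⟩, hst, rfl⟩
    convert smul_add_smul_add_smul_mem_convexHull A (A + u) (A + v) (sub_nonneg.mpr hst) hs ht
      (by ring) using 1
    module
  · rintro _ (rfl | rfl | rfl)
    · exact ⟨0, 0, by norm_num, by norm_num, by norm_num, by module⟩
    · exact ⟨1, 0, by norm_num, by norm_num, by norm_num, by module⟩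
    · exact ⟨0, 1, by norm_num, by norm_num, by norm_num, by module⟩

theorem trapezoid_eq_fan (A u v : E) {h w w' : ℝ} (hh : 0 < h) (hw : 0 < w) (hw' : 0 < w') :
    trapezoid A u v (h + w + w') h =
      convexHull ℝ {A + w • u + h • v, A, A + h • v} ∪
        convexHull ℝ {A + (h + w + w') • u, A + w • u + h • v, A + (w + w') • u + h • v} ∪
        convexHull ℝ {A, A + (h + w + w') • u, A + w • u + h • v} := by
  set k := h + w + w' with hk
  have hk₀ : 0 < k := by positivity
  refine Set.Subset.antisymm ?_ ?_
  · rintro _ ⟨s, t, hs, ⟨ht₀, ht⟩, hst, rfl⟩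
    have hth : 0 ≤ 1 - t / h := by rw [sub_nonneg, div_le_one hh]; exact ht
    by_cases hleft : s / w ≤ t / h
    · left; left
      convert smul_add_smul_add_smul_mem_convexHull (A + w • u + h • v) A (A + h • v)
        (div_nonneg hs hw.le) hth (sub_nonneg.mpr hleft) (by ring) using 1
      match_scalars <;> field_simp <;> ring
    by_cases hright : (k - (s + t)) / w' ≤ t / h
    · left; right
      convert smul_add_smul_add_smul_mem_convexHull (A + k • u) (A + w • u + h • v)
        (A + (w + w') • u + h • v) hth (div_nonneg (sub_nonneg.mpr hst) hw'.le)
        (sub_nonneg.mpr hright) (by ring) using 1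
      match_scalars <;> field_simp <;> rw [hk] <;> ring
    · right
      rw [not_le, lt_div_iff₀' hw] at hleft
      rw [not_le, lt_div_iff₀' hw'] at hright
      convert smul_add_smul_add_smul_mem_convexHull A (A + k • u) (A + w • u + h • v)
        (div_nonneg (sub_nonneg.mpr hright.le) hk₀.le)
        (div_nonneg (sub_nonneg.mpr hleft.le) hk₀.le) (div_nonneg ht₀ hh.le)
        (by field_simp; rw [hk]; ring) using 1
      match_scalars <;> field_simp <;> ring
  · have vertex {P : E} (s t : ℝ) (hP : A + s • u + t • v = P) (hs : 0 ≤ s) (ht : 0 ≤ t)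
        (hth : t ≤ h) (hst : s + t ≤ k) : P ∈ trapezoid A u v k h := ⟨s, t, hs, ⟨ht, hth⟩, hst, hP⟩
    have hA : A ∈ trapezoid A u v k h := by apply vertex 0 0 (by module) <;> linarith
    have hX : A + k • u ∈ trapezoid A u v k h := by apply vertex k 0 (by module) <;> linarith
    have hY : A + h • v ∈ trapezoid A u v k h := by apply vertex 0 h (by module) <;> linarith
    have hS : A + w • u + h • v ∈ trapezoid A u v k h := by apply vertex w h rfl <;> linarith
    have hZ : A + (w + w') • u + h • v ∈ trapezoid A u v k h := by
      apply vertex (w + w') h rfl <;> linarith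
    refine Set.union_subset (Set.union_subset ?_ ?_) ?_ <;>
      refine convexHull_min ?_ (convex_trapezoid A u v k h) <;>
      simp only [Set.insert_subset_iff, Set.singleton_subset_iff, hA, hX, hY, hS, hZ, and_self]

end Oblique

/-- `S` is a union of `n` triangles with side lengths `(p, q, r)`, which are allowed to overlap:
disjointness of the interiors is recovered at the end from the area of `S`. -/
def HasTriangleCover (p q r : ℝ) (n : ℕ) (S : Set Plane) : Prop :=
  ∃ T : Fin n → Set Plane, (∀ i, IsTriangle p q r (T i)) ∧ S = ⋃ i, T i

section Cover

variable {p q r : ℝ} {S S' : Set Plane} {u v : Plane}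

theorem isTriangle_trapezoid_one_one (A u v : Plane) :
    IsTriangle ‖v‖ ‖u‖ ‖u - v‖ (trapezoid A u v 1 1) :=
  ⟨A + u, A + v, A, by simp, by simp, by simp [dist_eq_norm], by
    rw [trapezoid_one_one, Set.insert_comm, Set.pair_comm A, Set.insert_comm]⟩

theorem IsTriangle.swap (h : IsTriangle p q r S) : IsTriangle q p r S := by
  obtain ⟨P, Q, R, hp, hq, hr, rfl⟩ := h
  exact ⟨Q, P, R, hq, hp, dist_comm P Q ▸ hr, by rw [Set.insert_comm]⟩

theorem IsTriangle.hasTriangleCover_one (h : IsTriangle p q r S) : HasTriangleCover p q r 1 S :=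
  ⟨fun _ ↦ S, fun _ ↦ h, (Set.iUnion_const S).symm⟩

theorem HasTriangleCover.exists_isTriangle {n : ℕ} (h : HasTriangleCover p q r n S) (hn : 0 < n) :
    ∃ T, IsTriangle p q r T := by
  obtain ⟨T, hT, -⟩ := h
  exact ⟨T ⟨0, hn⟩, hT _⟩

theorem HasTriangleCover.swap {n : ℕ} (h : HasTriangleCover p q r n S) :
    HasTriangleCover q p r n S := by
  obtain ⟨T, hT, rfl⟩ := h
  exact ⟨T, fun i ↦ (hT i).swap, rfl⟩

theorem HasTriangleCover.union {n n' : ℕ} (h : HasTriangleCover p q r n S)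
    (h' : HasTriangleCover p q r n' S') : HasTriangleCover p q r (n + n') (S ∪ S') := by
  obtain ⟨T, hT, rfl⟩ := h
  obtain ⟨T', hT', rfl⟩ := h'
  refine ⟨Fin.append T T', fun i ↦ ?_, ?_⟩
  · induction i using Fin.addCases <;> simp only [Fin.append_left, Fin.append_right, hT, hT']
  · rw [← finSumFinEquiv.surjective.iUnion_comp, Set.iUnion_sum]
    simp only [finSumFinEquiv_apply_left, finSumFinEquiv_apply_right, Fin.append_left,
      Fin.append_right]

theorem hasTriangleCover_parallelogram_one_one (hu : ‖u‖ = q) (hv : ‖v‖ = p) (huv : ‖u - v‖ = r)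
    (A : Plane) : HasTriangleCover p q r 2 (parallelogram A u v 1 1) := by
  rw [parallelogram_one_one_eq_union]
  refine .union (n := 1) (n' := 1) (IsTriangle.hasTriangleCover_one ?_)
    (IsTriangle.hasTriangleCover_one ?_)
  · simpa only [hu, hv, huv] using isTriangle_trapezoid_one_one A u v
  · simpa only [neg_sub_neg, norm_neg, norm_sub_rev v u, hu, hv, huv]
      using isTriangle_trapezoid_one_one (A + u + v) (-u) (-v)

theorem hasTriangleCover_parallelogram_nsmul {X Y : ℝ} {n : ℕ} (hX : 0 ≤ X)
    (hpar : ∀ A, HasTriangleCover p q r n (parallelogram A u v X Y)) {i : ℕ} (hi : 1 ≤ i)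
    (A : Plane) : HasTriangleCover p q r (i * n) (parallelogram A u v (i * X) Y) := by
  induction i, hi using Nat.le_induction with
  | base => simpa using hpar A
  | succ i _ ih =>
    rw [Nat.cast_succ, add_one_mul, add_one_mul,
      parallelogram_add_eq_union A u v (by positivity) hX]
    exact ih.union (hpar _)

theorem hasTriangleCover_trapezoid_columns {x k h : ℝ} {n n' : ℕ} (hx : 0 ≤ x) (hhk : h ≤ k)
    (hpar : ∀ A, HasTriangleCover p q r n (parallelogram A u v x h))
    (htrap : ∀ A, HasTriangleCover p q r n' (trapezoid A u v k h)) (i : ℕ) (A : Plane) :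
    HasTriangleCover p q r (i * n + n') (trapezoid A u v (i * x + k) h) := by
  induction i generalizing A with
  | zero => simpa using htrap A
  | succ i ih =>
    rw [show ((i + 1 : ℕ) : ℝ) * x + k = x + (i * x + k) by push_cast; ring,
      show (i + 1) * n + n' = n + (i * n + n') by ring,
      trapezoid_add_eq_parallelogram_union A u v hx
        (hhk.trans (le_add_of_nonneg_left (by positivity)))]
    exact (hpar A).union (ih _)

theorem hasTriangleCover_trapezoid_rows {J₀ M : ℕ}
    (hrow : ∀ J ≥ J₀, ∀ A, HasTriangleCover p q r (M * (2 * J + 1)) (trapezoid A u v (J + 1) 1))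
    {J H : ℕ} (hJ : J₀ ≤ J) (hH : 1 ≤ H) (A : Plane) :
    HasTriangleCover p q r (M * (H * (2 * J + H))) (trapezoid A u v (J + H) H) := by
  induction H, hH using Nat.le_induction generalizing A with
  | base => simpa using hrow J hJ A
  | succ H _ ih =>
    have hbottom := hrow (J + H) (hJ.trans le_self_add) A
    have htop := ih (A + (1 : ℝ) • v)
    rw [show M * ((H + 1) * (2 * J + (H + 1))) =
        M * (2 * (J + H) + 1) + M * (H * (2 * J + H)) by ring,
      Nat.cast_succ, add_comm (H : ℝ) 1, trapezoid_add_eq_union _ _ _ _ zero_le_one H.cast_nonneg]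
    convert hbottom.union htop using 3 <;> push_cast <;> ring

theorem IsTriangle.hasTriangleCover_sq {k : ℕ} (hk : 0 < k)
    (h : IsTriangle (k * p) (k * q) (k * r) S) : HasTriangleCover p q r (k ^ 2) S := by
  obtain ⟨P, Q, R, hp, hq, hr, rfl⟩ := h
  have hk' : (0 : ℝ) < k := by positivity
  set u := (k : ℝ)⁻¹ • (P - R)
  set v := (k : ℝ)⁻¹ • (Q - R)
  have norm_frame {X Y : Plane} {x : ℝ} (h : dist X Y = k * x) : ‖(k : ℝ)⁻¹ • (X - Y)‖ = x := by
    rw [norm_smul, ← dist_eq_norm, h, norm_inv, Real.norm_natCast, inv_mul_cancel_left₀ hk'.ne']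
  have hu : ‖u‖ = q := norm_frame hq
  have hv : ‖v‖ = p := norm_frame hp
  have huv : ‖u - v‖ = r := by
    rw [← smul_sub, sub_sub_sub_cancel_right, norm_frame hr]
  have hrow (J : ℕ) (A : Plane) :
      HasTriangleCover p q r (1 * (2 * J + 1)) (trapezoid A u v (J + 1) 1) := by
    have hcols := hasTriangleCover_trapezoid_columns zero_le_one le_rfl
      (hasTriangleCover_parallelogram_one_one hu hv huv)
      (fun A ↦ (hu ▸ hv ▸ huv ▸ isTriangle_trapezoid_one_one A u v).hasTriangleCover_one) J A
    rwa [mul_one, mul_comm J, ← one_mul (2 * J + 1)] at hcols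
  have hrows := hasTriangleCover_trapezoid_rows (J₀ := 0) (fun J _ ↦ hrow J) le_rfl hk R
  have htriangle : convexHull ℝ {P, Q, R} = trapezoid R u v k k := by
    rw [← mul_one (k : ℝ), ← trapezoid_smul_smul R u v hk', trapezoid_one_one,
      smul_inv_smul₀ hk'.ne', smul_inv_smul₀ hk'.ne', add_sub_cancel, add_sub_cancel,
      Set.insert_comm R, Set.pair_comm R]
  simpa only [htriangle, CharP.cast_eq_zero, zero_add, mul_zero, one_mul, sq] using hrows

end Cover

section EquilateralFrame

variable {V : Type*} [NormedAddCommGroup V] {u v : V}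

/-- Unit vectors at an angle of 60°: the edges of an equilateral triangle of side 1. -/
def IsEquilateralFrame (u v : V) : Prop := ‖u‖ = 1 ∧ ‖v‖ = 1 ∧ ‖u - v‖ = 1

theorem IsEquilateralFrame.symm (h : IsEquilateralFrame u v) : IsEquilateralFrame v u :=
  ⟨h.2.1, h.1, norm_sub_rev u v ▸ h.2.2⟩

theorem IsEquilateralFrame.rotate (h : IsEquilateralFrame u v) :
    IsEquilateralFrame (v - u) (-u) :=
  ⟨h.symm.2.2, norm_neg u ▸ h.1, by simpa using h.2.1⟩

theorem IsEquilateralFrame.neg (h : IsEquilateralFrame u v) : IsEquilateralFrame (-u) (-v) :=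
  ⟨norm_neg u ▸ h.1, norm_neg v ▸ h.2.1, by rw [← neg_sub', norm_neg, h.2.2]⟩

variable [InnerProductSpace ℝ V]

theorem IsEquilateralFrame.norm_smul_add_smul_sq (h : IsEquilateralFrame u v) (x y : ℝ) :
    ‖x • u + y • v‖ ^ 2 = x ^ 2 + x * y + y ^ 2 := by
  have huv := norm_sub_sq_real u v
  rw [norm_add_sq_real, norm_smul, norm_smul, inner_smul_left, inner_smul_right, mul_pow, mul_pow,
    h.1, h.2.1, Real.norm_eq_abs, Real.norm_eq_abs, sq_abs, sq_abs, conj_trivial]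
  rw [h.1, h.2.1, h.2.2] at huv
  linear_combination x * y * huv

theorem IsEquilateralFrame.norm_eq_of_sq_eq (h : IsEquilateralFrame u v) {x y z : ℝ} (hz : 0 ≤ z)
    (hxyz : x ^ 2 + x * y + y ^ 2 = z ^ 2) : ‖x • u + y • v‖ = z := by
  rw [← sq_eq_sq₀ (norm_nonneg _) hz, h.norm_smul_add_smul_sq, hxyz]

theorem IsEquilateralFrame.dist_eq_of_sq_eq (h : IsEquilateralFrame u v) {P Q : V} {x y z : ℝ}
    (hPQ : P - Q = x • u + y • v) (hz : 0 ≤ z) (hxyz : x ^ 2 + x * y + y ^ 2 = z ^ 2) :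
    dist P Q = z := by
  rw [dist_eq_norm, hPQ, h.norm_eq_of_sq_eq hz hxyz]

/-- With `u`, `v` read as `1`, `ω = exp (iπ/3)`, this multiplies the frame by `(x + y ω) / z`. -/
theorem IsEquilateralFrame.eisenstein_mul (h : IsEquilateralFrame u v) {x y z : ℝ} (hz : 0 < z)
    (hxyz : z ^ 2 = x ^ 2 + y ^ 2 + x * y) :
    IsEquilateralFrame (z⁻¹ • (x • u + y • v)) (z⁻¹ • (-y • u + (x + y) • v)) := by
  have norm_inv_smul {w : V} (hw : ‖w‖ = z) : ‖z⁻¹ • w‖ = 1 := by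
    rw [norm_smul, hw, norm_inv, Real.norm_of_nonneg hz.le, inv_mul_cancel₀ hz.ne']
  refine ⟨norm_inv_smul (h.norm_eq_of_sq_eq hz.le (by linear_combination -hxyz)),
    norm_inv_smul (h.norm_eq_of_sq_eq hz.le (by linear_combination -hxyz)), ?_⟩
  rw [← smul_sub, show x • u + y • v - (-y • u + (x + y) • v) = (x + y) • u + (-x) • v by module]
  exact norm_inv_smul (h.norm_eq_of_sq_eq hz.le (by linear_combination -hxyz))

end EquilateralFrame

section Arithmetic

variable {a b c : ℕ}

theorem three_le_of_sq_eq (ha : 0 < a) (hb : 0 < b) (h : c ^ 2 = a ^ 2 + b ^ 2 + a * b) :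
    3 ≤ a := by
  by_contra! ha₃
  have hbc : b < c := by nlinarith
  obtain ⟨d, rfl⟩ := Nat.exists_eq_add_of_lt hbc
  interval_cases a
  · nlinarith
  · rcases Nat.eq_zero_or_pos d with rfl | hd <;> nlinarith

theorem exists_mul_add_mul_add_sq_add_sq_eq {k l J : ℕ} (hk : a ≤ k * b) (hl : b ≤ l * a)
    (hJ : k + l ≤ J) : ∃ i j : ℕ, i * a + j * b + a ^ 2 + b ^ 2 = J * (a * b) := by
  obtain ⟨i, hi⟩ := Nat.exists_eq_add_of_le hk
  obtain ⟨j, hj⟩ := Nat.exists_eq_add_of_le hl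
  obtain ⟨d, rfl⟩ := Nat.exists_eq_add_of_le hJ
  refine ⟨i + d * b, j, ?_⟩
  zify at hi hj ⊢
  linear_combination -a * hi - b * hj

theorem exists_le_mul_and_le_mul (ha : 0 < a) (hb : 0 < b) (h : c ^ 2 = a ^ 2 + b ^ 2 + a * b) :
    ∃ k l : ℕ, a ≤ k * b ∧ b ≤ l * a ∧ 1 ≤ k + l ∧ 3 * (k + l) ≤ 2 * c := by
  have ha₃ : 3 ≤ a := three_le_of_sq_eq ha hb h
  have hb₃ : 3 ≤ b := three_le_of_sq_eq hb ha (by linarith)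
  have hc : a + b + 4 ≤ 2 * c := by nlinarith
  refine ⟨(a + 2) / 3, (b + 2) / 3, ?_, ?_, by lia, by lia⟩
  · calc a ≤ (a + 2) / 3 * 3 := by lia
      _ ≤ (a + 2) / 3 * b := by gcongr
  · calc b ≤ (b + 2) / 3 * 3 := by lia
      _ ≤ (b + 2) / 3 * a := by gcongr

end Arithmetic

section EquilateralTriangle

variable {a b c : ℕ} {u v : Plane}

theorem IsEquilateralFrame.isTriangle_convexHull (huv : IsEquilateralFrame u v) {P Q R : Plane}
    {a b c k : ℝ} (ha : 0 ≤ a) (hb : 0 ≤ b) (hc : 0 ≤ c) (hk : 0 ≤ k)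
    (h : c ^ 2 = a ^ 2 + b ^ 2 + a * b) (hP : P = R + (k * b) • u)
    (hQ : Q = R + (k * a) • (v - u)) :
    IsTriangle (k * a) (k * b) (k * c) (convexHull ℝ {P, Q, R}) := by
  subst hP hQ
  refine ⟨_, _, _, ?_, ?_, ?_, rfl⟩
  · exact huv.dist_eq_of_sq_eq (x := -(k * a)) (y := k * a) (by module) (by positivity) (by ring)
  · exact huv.dist_eq_of_sq_eq (x := k * b) (y := 0) (by module) (by positivity) (by ring)
  · exact huv.dist_eq_of_sq_eq (x := k * b + k * a) (y := -(k * a)) (by module) (by positivity)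
      (by linear_combination -k ^ 2 * h)

theorem hasTriangleCover_core_trapezoid (ha : 0 < a) (hb : 0 < b)
    (h : c ^ 2 = a ^ 2 + b ^ 2 + a * b) (huv : IsEquilateralFrame u v) (A : Plane) :
    HasTriangleCover a b c (a ^ 2 + b ^ 2 + c ^ 2) (trapezoid A u v (c ^ 2) (a * b)) := by
  have hc : 0 < c := by by_contra! hc; nlinarith
  have h' : (c : ℝ) ^ 2 = a ^ 2 + b ^ 2 + a * b := mod_cast h
  rw [show (c : ℝ) ^ 2 = a * b + b ^ 2 + a ^ 2 by linarith,
    trapezoid_eq_fan A u v (by positivity) (by positivity) (by positivity),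
    add_comm (a ^ 2) (b ^ 2)]
  refine .union (.union (IsTriangle.hasTriangleCover_sq hb ?_)
    (IsTriangle.hasTriangleCover_sq ha ?_)) (IsTriangle.hasTriangleCover_sq hc ?_)
  · exact huv.rotate.symm.neg.isTriangle_convexHull a.cast_nonneg b.cast_nonneg c.cast_nonneg
      b.cast_nonneg h' (by module) (by module)
  · exact huv.rotate.rotate.symm.isTriangle_convexHull a.cast_nonneg b.cast_nonneg c.cast_nonneg
      a.cast_nonneg h' (by module) (by module)
  · exact (huv.eisenstein_mul (x := b) (y := a) (z := c) (by positivity)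
      (by linear_combination h')).neg.isTriangle_convexHull a.cast_nonneg b.cast_nonneg
        c.cast_nonneg c.cast_nonneg h' (by match_scalars <;> field_simp <;> ring)
        (by match_scalars <;> field_simp <;> ring)

theorem hasTriangleCover_parallelogram (ha : 0 < a) (hb : 0 < b)
    (h : c ^ 2 = a ^ 2 + b ^ 2 + a * b) (huv : IsEquilateralFrame u v) (A : Plane) :
    HasTriangleCover a b c (a * 2) (parallelogram A u v a (a * b)) := by
  have h' : (c : ℝ) ^ 2 = a ^ 2 + b ^ 2 + a * b := mod_cast h
  have hcell (A : Plane) : HasTriangleCover a b c 2 (parallelogram A v u b a) := by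
    have hA := hasTriangleCover_parallelogram_one_one (u := (b : ℝ) • v) (v := -(a : ℝ) • u)
      (q := b) (p := a) (r := c) ?_ ?_ ?_ (A + (a : ℝ) • u)
    · rwa [neg_smul, parallelogram_swap, ← parallelogram_neg,
        parallelogram_smul_smul _ _ _ (by positivity) (by positivity), mul_one, mul_one,
        parallelogram_swap] at hA
    · rw [norm_smul, huv.2.1, Real.norm_natCast, mul_one]
    · rw [norm_smul, huv.1, norm_neg, Real.norm_natCast, mul_one]
    · rw [neg_smul, sub_neg_eq_add, add_comm]
      exact huv.norm_eq_of_sq_eq c.cast_nonneg (by linear_combination -h')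
  rw [parallelogram_swap]
  exact hasTriangleCover_parallelogram_nsmul b.cast_nonneg hcell ha A

theorem hasTriangleCover_row (ha : 0 < a) (hb : 0 < b) (h : c ^ 2 = a ^ 2 + b ^ 2 + a * b)
    {k l J : ℕ} (hk : a ≤ k * b) (hl : b ≤ l * a) (hJ : k + l ≤ J)
    (huv : IsEquilateralFrame u v) (A : Plane) :
    HasTriangleCover a b c (a * b * (2 * J + 1))
      (trapezoid A ((a * b : ℝ) • u) ((a * b : ℝ) • v) (J + 1) 1) := by
  obtain ⟨i, j, hij⟩ := exists_mul_add_mul_add_sq_add_sq_eq hk hl hJ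
  have h' : (c : ℝ) ^ 2 = a ^ 2 + b ^ 2 + a * b := mod_cast h
  have hij' : (i * a + j * b + a ^ 2 + b ^ 2 : ℝ) = J * (a * b) := mod_cast hij
  have hcore : (a * b : ℝ) ≤ c ^ 2 := by rw [h']; linarith [sq_nonneg (a : ℝ), sq_nonneg (b : ℝ)]
  have hb_columns (A : Plane) : HasTriangleCover a b c (b * 2) (parallelogram A u v b (a * b)) :=
    mul_comm (b : ℝ) a ▸ (hasTriangleCover_parallelogram hb ha (by linarith) huv A).swap
  have hrow := hasTriangleCover_trapezoid_columns a.cast_nonneg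
    (le_add_of_nonneg_of_le (by positivity) hcore)
    (hasTriangleCover_parallelogram ha hb h huv)
    (hasTriangleCover_trapezoid_columns b.cast_nonneg hcore hb_columns
      (hasTriangleCover_core_trapezoid ha hb h huv) j) i A
  have hcount : i * (a * 2) + (j * (b * 2) + (a ^ 2 + b ^ 2 + c ^ 2)) = a * b * (2 * J + 1) := by
    linarith
  have hlength : (i * a + (j * b + c ^ 2) : ℝ) = a * b * (J + 1) := by linarith
  rwa [hcount, hlength, ← mul_one (a * b : ℝ), mul_assoc _ 1, one_mul,
    ← trapezoid_smul_smul A u v (by positivity)] at hrow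

theorem hasTriangleCover_equilateral (ha : 0 < a) (hb : 0 < b)
    (h : c ^ 2 = a ^ 2 + b ^ 2 + a * b) {n : ℕ} (hn : 2 * c ≤ n) (huv : IsEquilateralFrame u v)
    (A : Plane) :
    HasTriangleCover a b c (a * b * n ^ 2)
      (convexHull ℝ {A, A + (a * b * n : ℝ) • u, A + (a * b * n : ℝ) • v}) := by
  obtain ⟨k, l, hk, hl, hkl, hc⟩ := exists_le_mul_and_le_mul ha hb h
  have hrows {u v : Plane} (huv : IsEquilateralFrame u v) {J H : ℕ} (hJ : k + l ≤ J) (hH : 1 ≤ H)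
      (A : Plane) : HasTriangleCover a b c (a * b * (H * (2 * J + H)))
        (trapezoid A ((a * b : ℝ) • u) ((a * b : ℝ) • v) (J + H) H) :=
    hasTriangleCover_trapezoid_rows
      (fun J hJ A ↦ hasTriangleCover_row ha hb h hk hl hJ huv A) hJ hH A
  obtain ⟨r, rfl⟩ : ∃ r, n = 2 * (k + l) + r := Nat.exists_eq_add_of_le (by lia)
  set o := k + l
  rw [← trapezoid_one_one, trapezoid_smul_smul _ _ _ (by positivity), mul_assoc (a * b : ℝ),
    mul_one, ← trapezoid_smul_smul _ _ _ (by positivity),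
    show ((2 * o + r : ℕ) : ℝ) = 2 * o + r by push_cast; ring,
    trapezoid_self_eq_pinwheel _ _ _ o.cast_nonneg r.cast_nonneg, ← smul_sub, ← smul_neg,
    show a * b * (2 * o + r) ^ 2 = a * b * (o * (2 * o + o)) + a * b * (o * (2 * r + o)) +
      a * b * (r * (2 * o + r)) by ring]
  exact ((hrows huv le_rfl hkl _).union (hrows huv.symm (by lia) hkl _)).union
    (hrows huv.rotate le_rfl (by lia) _)

end EquilateralTriangle

theorem IsTriangle.exists_equilateralFrame {p q r : ℝ} (hp : 0 < p) (hq : 0 < q)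
    (hr : p ^ 2 + q ^ 2 - p * q = r ^ 2) {S : Set Plane} (h : IsTriangle p q r S) :
    ∃ R u v : Plane, IsEquilateralFrame u v ∧ S = convexHull ℝ {R, R + q • u, R + p • v} := by
  obtain ⟨P, Q, R, hQR, hPR, hPQ, rfl⟩ := h
  rw [dist_eq_norm] at hQR hPR hPQ
  refine ⟨R, q⁻¹ • (P - R), p⁻¹ • (Q - R), ⟨?_, ?_, ?_⟩, ?_⟩
  · rw [norm_smul, hPR, norm_inv, Real.norm_of_nonneg hq.le, inv_mul_cancel₀ hq.ne']
  · rw [norm_smul, hQR, norm_inv, Real.norm_of_nonneg hp.le, inv_mul_cancel₀ hp.ne']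
  · have hinner := norm_sub_sq_real (P - R) (Q - R)
    rw [sub_sub_sub_cancel_right, hPQ, hPR, hQR] at hinner
    have hcos : inner ℝ (P - R) (Q - R) = p * q / 2 := by linarith
    rw [← sq_eq_sq₀ (norm_nonneg _) zero_le_one, norm_sub_sq_real, norm_smul, norm_smul,
      inner_smul_left, inner_smul_right, hPR, hQR, hcos, norm_inv, norm_inv,
      Real.norm_of_nonneg hp.le, Real.norm_of_nonneg hq.le, conj_trivial]
    field_simp
    norm_num
  · rw [smul_inv_smul₀ hp.ne', smul_inv_smul₀ hq.ne', add_sub_cancel, add_sub_cancel,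
      Set.insert_comm R, Set.pair_comm R]

theorem sq_add_sq_sub_mul_eq_sq_of_sq_eq {a b c : ℝ} (h : c ^ 2 = a ^ 2 + b ^ 2 + a * b) (m : ℝ) :
    ((a + 2 * b) * m * a * c) ^ 2 + ((b + 2 * a) * m * b * c) ^ 2 -
      (a + 2 * b) * m * a * c * ((b + 2 * a) * m * b * c) = (m * c ^ 3) ^ 2 := by
  linear_combination -(m * c) ^ 2 * (c ^ 2 + a ^ 2 + b ^ 2 + a * b) * h

theorem hasTriangleCover_of_isTriangle {a b c m : ℕ} (ha : 0 < a) (hb : 0 < b)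
    (h : c ^ 2 = a ^ 2 + b ^ 2 + a * b) (hm : 1 ≤ m) {S : Set Plane}
    (hS : IsTriangle ((a + 2 * b) * m * a * c) ((b + 2 * a) * m * b * c) (m * c ^ 3) S) :
    HasTriangleCover a b c ((a + 2 * b) * (b + 2 * a) * m ^ 2 * c ^ 2) S := by
  have h' : (c : ℝ) ^ 2 = a ^ 2 + b ^ 2 + a * b := mod_cast h
  have hc : 0 < c := by by_contra! hc; nlinarith
  obtain ⟨R, u, v, huv, rfl⟩ :=
    hS.exists_equilateralFrame (by positivity) (by positivity)
      (sq_add_sq_sub_mul_eq_sq_of_sq_eq h' m)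
  set q : ℝ := (b + 2 * a) * m * b * c
  set p : ℝ := (a + 2 * b) * m * a * c
  set K : ℝ := m * a * b * c
  have hKq : 2 * K ≤ q := by
    have : 0 ≤ (m * b ^ 2 * c : ℝ) := by positivity
    linear_combination this
  have hKp : 2 * K ≤ p := by
    have : 0 ≤ (m * a ^ 2 * c : ℝ) := by positivity
    linear_combination this
  have hcut := convexHull_triple_eq_union_of_mem_sides (D := R + K • u + K • v)
    (add_smul_mem_segment R u (by positivity) hKq (by positivity))
    (add_smul_mem_segment R v (by positivity) hKp (by positivity))
    ⟨1 / 2, 1 / 2, by norm_num, by norm_num, by norm_num, by module⟩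
  have hcount : (a + 2 * b) * (b + 2 * a) * m ^ 2 * c ^ 2 =
      a * b * (2 * m * c) ^ 2 + (m * b * c) ^ 2 + (m * a * c) ^ 2 + (m * c ^ 2) ^ 2 := by
    zify at h ⊢
    linear_combination -(m ^ 2 * c ^ 2) * h
  have hcorner := hasTriangleCover_equilateral ha hb h (n := 2 * m * c) (by nlinarith) huv R
  rw [show (a * b * (2 * m * c : ℕ) : ℝ) = 2 * K by push_cast; ring] at hcorner
  rw [hcut, hcount]
  refine .union (.union (.union hcorner (IsTriangle.hasTriangleCover_sq (by positivity) ?_))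
    (IsTriangle.hasTriangleCover_sq (by positivity) ?_))
      (IsTriangle.hasTriangleCover_sq (by positivity) ?_)
  · exact huv.isTriangle_convexHull a.cast_nonneg b.cast_nonneg c.cast_nonneg
      (Nat.cast_nonneg _) h' (by push_cast; module) (by push_cast; module)
  · exact huv.rotate.neg.isTriangle_convexHull a.cast_nonneg b.cast_nonneg c.cast_nonneg
      (Nat.cast_nonneg _) h' (by push_cast; module) (by push_cast; module)
  · exact (huv.rotate.neg.eisenstein_mul (by positivity) h').isTriangle_convexHull a.cast_nonneg
      b.cast_nonneg c.cast_nonneg (Nat.cast_nonneg _) h'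
      (by push_cast; match_scalars <;> field_simp <;> ring)
      (by push_cast; match_scalars <;> field_simp <;> ring)

section Congruence

variable {V P ι : Type*} [NormedAddCommGroup V] [InnerProductSpace ℝ V] [FiniteDimensional ℝ V]
  [MetricSpace P] [NormedAddTorsor V P]

theorem exists_linearIsometryEquiv_of_inner_eq {x y : ι → V}
    (hxy : ∀ i j, inner ℝ (x i) (x j) = inner ℝ (y i) (y j)) :
    ∃ e : V ≃ₗᵢ[ℝ] V, ∀ i, e (x i) = y i := by
  set f := Finsupp.linearCombination ℝ x
  set g := Finsupp.linearCombination ℝ y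
  have norm_eq (w : ι →₀ ℝ) : ‖g w‖ = ‖f w‖ := by
    rw [← sq_eq_sq₀ (norm_nonneg _) (norm_nonneg _), ← real_inner_self_eq_norm_sq,
      ← real_inner_self_eq_norm_sq]
    simp only [f, g, Finsupp.linearCombination_apply, Finsupp.sum, sum_inner, inner_sum,
      inner_smul_left, inner_smul_right, hxy]
  obtain ⟨s, hs⟩ := f.rangeRestrict.exists_rightInverse_of_surjective f.range_rangeRestrict
  have hfs (w : f.range) : f (s w) = w := congr_arg Subtype.val (LinearMap.congr_fun hs w)
  let L : f.range →ₗᵢ[ℝ] V := ⟨g ∘ₗ s, fun w ↦ by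
    rw [LinearMap.comp_apply, norm_eq, hfs, Submodule.coe_norm]⟩
  have hL (i : ι) : L (f.rangeRestrict (Finsupp.single i 1)) = y i := by
    have hg : g (s (f.rangeRestrict (Finsupp.single i 1)) - Finsupp.single i 1) = 0 := by
      rw [← norm_eq_zero, norm_eq, map_sub, hfs, LinearMap.codRestrict_apply, sub_self, norm_zero]
    rw [map_sub, sub_eq_zero, Finsupp.linearCombination_single, one_smul] at hg
    exact hg
  refine ⟨L.extend.toLinearIsometryEquiv rfl, fun i ↦ ?_⟩
  rw [LinearIsometry.coe_toLinearIsometryEquiv, ← hL i, ← LinearIsometry.extend_apply]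
  simp [f]

theorem exists_affineIsometryEquiv_of_congruent {p q : ι → P} (hpq : Congruent p q) :
    ∃ f : P ≃ᵃⁱ[ℝ] P, ∀ i, f (p i) = q i := by
  rcases isEmpty_or_nonempty ι with _ | ⟨⟨o⟩⟩
  · exact ⟨.refl ℝ P, isEmptyElim⟩
  have inner_eq (i j : ι) :
      inner ℝ (p i -ᵥ p o) (p j -ᵥ p o) = inner ℝ (q i -ᵥ q o) (q j -ᵥ q o) := by
    simp only [real_inner_eq_norm_mul_self_add_norm_mul_self_sub_norm_sub_mul_self_div_two,
      vsub_sub_vsub_cancel_right, ← dist_eq_norm_vsub V, hpq.dist_eq]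
  obtain ⟨e, he⟩ := exists_linearIsometryEquiv_of_inner_eq inner_eq
  refine ⟨((AffineIsometryEquiv.vaddConst ℝ (p o)).symm.trans e.toAffineIsometryEquiv).trans
    (AffineIsometryEquiv.vaddConst ℝ (q o)), fun i ↦ ?_⟩
  simp [he]

end Congruence

section Area

open MeasureTheory
open scoped Pointwise

theorem pairwise_aedisjoint_of_measure_iUnion_eq_sum {α ι : Type*} [MeasurableSpace α]
    [Fintype ι] {μ : Measure α} {T : ι → Set α} (hT : ∀ i, MeasurableSet (T i))
    (hfin : ∀ i, μ (T i) ≠ ⊤) (hsum : μ (⋃ i, T i) = ∑ i, μ (T i)) :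
    Pairwise fun i j ↦ AEDisjoint μ (T i) (T j) := by
  classical
  intro i j hij
  set U := ⋃ k ∈ Finset.univ.erase i, T k
  have hU : μ U ≤ ∑ k ∈ Finset.univ.erase i, μ (T k) := measure_biUnion_finset_le _ _
  have hunion : T i ∪ U = ⋃ k, T k := by
    rw [← Finset.set_biUnion_insert, Finset.insert_erase (Finset.mem_univ i)]
    simp
  have hinter : μ (T i ∪ U) + μ (T i ∩ U) ≤ μ (T i ∪ U) + 0 :=
    calc μ (T i ∪ U) + μ (T i ∩ U) = μ (T i) + μ U :=
          measure_union_add_inter _ (Finset.measurableSet_biUnion _ fun k _ ↦ hT k)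
      _ ≤ μ (T i) + ∑ k ∈ Finset.univ.erase i, μ (T k) := by gcongr
      _ = μ (T i ∪ U) + 0 := by
          rw [Finset.add_sum_erase _ (fun k ↦ μ (T k)) (Finset.mem_univ i), hunion, hsum, add_zero]
  have hnull : μ (T i ∩ U) = 0 := by
    refine le_zero_iff.mp ((ENNReal.add_le_add_iff_left ?_).mp hinter)
    rw [hunion, hsum]
    exact ENNReal.sum_ne_top.mpr fun k _ ↦ hfin k
  refine measure_mono_null (Set.inter_subset_inter_right _ ?_) hnull
  exact Set.subset_biUnion_of_mem (u := T) (Finset.mem_erase.mpr ⟨hij.symm, Finset.mem_univ j⟩)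

theorem interior_inter_interior_eq_empty_of_aedisjoint {X : Type*} [TopologicalSpace X]
    [MeasurableSpace X] {μ : Measure X} [μ.IsOpenPosMeasure] {s t : Set X}
    (h : AEDisjoint μ s t) : interior s ∩ interior t = ∅ :=
  ((isOpen_interior.inter isOpen_interior).measure_eq_zero_iff μ).mp
    (measure_mono_null (Set.inter_subset_inter interior_subset interior_subset) h)

theorem volume_convexHull_triple (P Q R : Plane) :
    volume (convexHull ℝ {P, Q, R}) =
      ENNReal.ofReal √(‖P - R‖ ^ 2 * ‖Q - R‖ ^ 2 - inner ℝ (P - R) (Q - R) ^ 2) *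
        volume (convexHull ℝ {pt 1 0, pt 0 1, 0}) := by
  set x := P - R with hx
  set y := Q - R with hy
  let f : Plane →ₗ[ℝ] Plane := (EuclideanSpace.basisFun (Fin 2) ℝ).toBasis.constr ℝ ![x, y]
  have hf₀ : f (pt 1 0) = x := by simp [f, pt, Module.Basis.constr_apply_fintype]
  have hf₁ : f (pt 0 1) = y := by simp [f, pt, Module.Basis.constr_apply_fintype]
  have hdet : LinearMap.det f = x 0 * y 1 - y 0 * x 1 := by
    rw [← LinearMap.det_toMatrix (EuclideanSpace.basisFun (Fin 2) ℝ).toBasis, Matrix.det_fin_two]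
    simp [LinearMap.toMatrix_apply, f]
  have hLagrange : ‖x‖ ^ 2 * ‖y‖ ^ 2 - inner ℝ x y ^ 2 = LinearMap.det f ^ 2 := by
    simp only [EuclideanSpace.norm_sq_eq, PiLp.inner_apply, Fin.sum_univ_two, Real.norm_eq_abs,
      sq_abs, RCLike.inner_apply, conj_trivial, hdet]
    ring
  have himage : convexHull ℝ {P, Q, R} = R +ᵥ f '' convexHull ℝ {pt 1 0, pt 0 1, 0} := by
    rw [f.image_convexHull, ← convexHull_vadd]
    simp [Set.image_insert_eq, hf₀, hf₁, hx, hy, ← Set.image_vadd]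
  rw [hLagrange, Real.sqrt_sq_eq_abs, ← Measure.addHaar_image_linearMap, himage, measure_vadd]

theorem IsTriangle.volume_eq {p q r : ℝ} {Δ : Set Plane} (h : IsTriangle p q r Δ) :
    volume Δ = ENNReal.ofReal √(q ^ 2 * p ^ 2 - ((q ^ 2 + p ^ 2 - r ^ 2) / 2) ^ 2) *
      volume (convexHull ℝ {pt 1 0, pt 0 1, 0}) := by
  obtain ⟨P, Q, R, rfl, rfl, rfl, rfl⟩ := h
  rw [volume_convexHull_triple,
    real_inner_eq_norm_mul_self_add_norm_mul_self_sub_norm_sub_mul_self_div_two,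
    sub_sub_sub_cancel_right]
  simp only [dist_eq_norm, sq]

theorem IsTriangle.volume_eq_of_sq_eq {p q r : ℝ} {Δ : Set Plane} (h : IsTriangle p q r Δ)
    (hpq : 0 ≤ p * q) (hr : (q ^ 2 + p ^ 2 - r ^ 2) ^ 2 = (p * q) ^ 2) :
    volume Δ = ENNReal.ofReal (p * q * √(3 / 4)) * volume (convexHull ℝ {pt 1 0, pt 0 1, 0}) := by
  rw [h.volume_eq, div_pow, hr,
    show q ^ 2 * p ^ 2 - (p * q) ^ 2 / 2 ^ 2 = (p * q) ^ 2 * (3 / 4) by ring,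
    Real.sqrt_mul (sq_nonneg _), Real.sqrt_sq hpq]

theorem IsTriangle.isCompact {p q r : ℝ} {Δ : Set Plane} (h : IsTriangle p q r Δ) :
    IsCompact Δ := by
  obtain ⟨P, Q, R, -, -, -, rfl⟩ := h
  exact (Set.toFinite {P, Q, R}).isCompact_convexHull ℝ

theorem IsTriangle.exists_isometryEquiv_image_eq {p q r : ℝ} {Δ Δ' : Set Plane}
    (h : IsTriangle p q r Δ) (h' : IsTriangle p q r Δ') : ∃ f : Plane ≃ᵢ Plane, f '' Δ = Δ' := by
  obtain ⟨P, Q, R, hp, hq, hr, rfl⟩ := h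
  obtain ⟨P', Q', R', hp', hq', hr', rfl⟩ := h'
  obtain ⟨f, hf⟩ := exists_affineIsometryEquiv_of_congruent (V := Plane)
    (EuclideanGeometry.side_side_side (hr.trans hr'.symm) (hp.trans hp'.symm)
      (by rw [dist_comm, hq, dist_comm, hq']))
  refine ⟨f.toIsometryEquiv, ?_⟩
  have hvertices : f '' {P, Q, R} = {P', Q', R'} := by
    rw [Set.image_insert_eq, Set.image_pair]
    exact congr_arg₂ _ (hf 0) (congr_arg₂ _ (hf 1) (congr_arg _ (hf 2)))
  rw [← hvertices]
  exact f.toAffineEquiv.toAffineMap.image_convexHull (𝕜 := ℝ) _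

theorem HasTriangleCover.tilesInto {p q r : ℝ} {n : ℕ} {S Δ : Set Plane}
    (h : HasTriangleCover p q r n S) (hΔ : IsTriangle p q r Δ) (hS : volume S = n * volume Δ) :
    TilesInto S n p q r := by
  obtain ⟨T, hT, rfl⟩ := h
  choose f hf using fun i ↦ hΔ.exists_isometryEquiv_image_eq (hT i)
  refine ⟨f, Δ, hΔ, by simp only [hf], fun i j hij ↦ ?_⟩
  have hvolume (i) : volume (T i) = volume Δ := (hT i).volume_eq.trans hΔ.volume_eq.symm
  have hdisjoint := pairwise_aedisjoint_of_measure_iUnion_eq_sum (μ := volume)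
    (fun i ↦ (hT i).isCompact.measurableSet) (fun i ↦ (hT i).isCompact.measure_lt_top.ne)
    (by simp [hvolume, hS])
  rw [hf, hf]
  exact interior_inter_interior_eq_empty_of_aedisjoint (hdisjoint hij)

end Area

theorem IsTriangle.volume_eq_mul_volume {a b c m : ℕ} (h : c ^ 2 = a ^ 2 + b ^ 2 + a * b)
    {Δ T : Set Plane}
    (hΔ : IsTriangle ((a + 2 * b) * m * a * c) ((b + 2 * a) * m * b * c) (m * c ^ 3) Δ)
    (hT : IsTriangle a b c T) :
    MeasureTheory.volume Δ =
      ((a + 2 * b) * (b + 2 * a) * m ^ 2 * c ^ 2 : ℕ) * MeasureTheory.volume T := by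
  have h' : (c : ℝ) ^ 2 = a ^ 2 + b ^ 2 + a * b := mod_cast h
  rw [hΔ.volume_eq_of_sq_eq (by positivity)
      (by rw [← sq_add_sq_sub_mul_eq_sq_of_sq_eq h' m]; ring),
    hT.volume_eq_of_sq_eq (by positivity) (by rw [h']; ring),
    ← ENNReal.ofReal_natCast, ← mul_assoc (ENNReal.ofReal _),
    ← ENNReal.ofReal_mul (Nat.cast_nonneg _)]
  congr 2
  push_cast
  ring

theorem stmt8_general (a b c : ℕ) (ha : 0 < a) (hb : 0 < b) (h : c ^ 2 = a ^ 2 + b ^ 2 + a * b)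
    (m : ℕ) (hm : 1 ≤ m) :
    ∀ Δ : Set Plane,
      IsTriangle (((a : ℝ) + 2 * b) * m * a * c) (((b : ℝ) + 2 * a) * m * b * c)
        ((m : ℝ) * c ^ 3) Δ →
      TilesInto Δ ((a + 2 * b) * (b + 2 * a) * m ^ 2 * c ^ 2) a b c := by
  intro Δ hΔ
  have hc : 0 < c := by by_contra! hc; nlinarith
  have hcover := hasTriangleCover_of_isTriangle ha hb h hm hΔ
  obtain ⟨T, hT⟩ := hcover.exists_isTriangle (by positivity)
  exact hcover.tilesInto hT (hΔ.volume_eq_mul_volume h hT)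

theorem stmt8 (a b c : ℕ) (ha : 0 < a) (hb : 0 < b) (hc : 0 < c)
    (hab : Nat.Coprime a b) (hac : Nat.Coprime a c) (hbc : Nat.Coprime b c)
    (h : c ^ 2 = a ^ 2 + b ^ 2 + a * b) (m : ℕ) (hm : 1 ≤ m) :
    ∀ Δ : Set Plane,
      IsTriangle (((a : ℝ) + 2 * b) * m * a * c) (((b : ℝ) + 2 * a) * m * b * c)
        ((m : ℝ) * c ^ 3) Δ →
      TilesInto Δ ((a + 2 * b) * (b + 2 * a) * m ^ 2 * c ^ 2) a b c :=
  stmt8_general a b c ha hb h m hm
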